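/- arXiv:2407.18681 — 4 statements merged into one kernel-verified Lean document; each statement's English description precedes it below -/
import Mathlib

section
/- Let f : ℝ^{d1} → ℝ be μ-strongly convex, h : ℝ^{d2} → ℝ convex, F ∈ ℝ^{d2×d1}, s > 0 with s²‖F‖² < 1, c ∈ (0, 2μ), step sizes τ_k = 1/(c(k+1)), σ_k = c s² (k+1), and suppose (x_k), (y_k) satisfy the PDHG optimality inclusions −[(x_{k+1} − x_k)/τ_k − Fᵀ(y_{k+1} − y_k) + Fᵀ y_{k+1}] ∈ ∂f(x_{k+1}) and −[(y_{k+1} − y_k)/σ_k − F(x_{k+1} − x_k) − F x_{k+1}] ∈ ∂h(y_{k+1}), while (x*, y*) satisfies −Fᵀ y* ∈ ∂f(x*) and F x* ∈ ∂h(y*). With α = min((2μ − c)/(s + c), 1/(1 + c s ‖F‖²)) and E(k) = ‖x_k − x*‖²/(2τ_k) + ‖y_k − y*‖²/(2σ_k) − ⟨F(x_k − x*), y_k − y*⟩, for every k ≥ 0 one has E(k) ≤ (∏_{j=1}^{k} (j+1)/(j+1+α)) · E(0). -/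
/-!
Write `X = x (k+1) - xs`, `Y = y (k+1) - ys`, and `(A, B)` for the increments of the two iterates.
Let `V m` be the quadratic form `m c/2 ‖·‖² + ‖·‖²/(2 m c s²) - ⟪F ·, ·⟫`, so that
`E(k) = V (k+1) (X - A, Y - B)` and `E(k+1) = V (k+2) (X, Y)`.

Adding the strong monotonicity of `∂f` and the monotonicity of `∂h` between the iterate and the
saddle point, and polarizing, gives
`V (k+1) (X, Y) - E(k) + V (k+1) (A, B) ≤ -μ ‖X‖²` (`monotone_primal`, `monotone_dual`).
The term `V (k+1) (A, B)` is nonnegative because `s ‖F‖ ≤ 1` (`lyapForm_nonneg`).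
Passing from `V (k+1)` to `V (k+2)` costs `c/2 ‖X‖²`, which is absorbed by `μ`, and gains
`‖Y‖²/(2 c s² (k+1)(k+2))`. By Young's inequality with weight `s`, the resulting surplus dominates
`α/(k+2) · E(k+1)`; the two terms in the minimum defining `α` are exactly what the coefficients of
`‖X‖²` and `‖Y‖²` require (`rate_bound`). Hence `(1 + α/(k+2)) E(k+1) ≤ E(k)`, and the product
bound follows by induction.
-/

open scoped RealInnerProductSpace

/-- `v` is a subgradient of `f` at `x`:
`f z ≥ f x + ⟨v, z − x⟩` for all `z`. -/
def IsSubgradAt {d : ℕ} (f : EuclideanSpace ℝ (Fin d) → ℝ)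
    (v x : EuclideanSpace ℝ (Fin d)) : Prop :=
  ∀ z, f x + ⟪v, z - x⟫ ≤ f z

/-- `f` is `μ`-strongly convex: for all `x, y` and every subgradient `v ∈ ∂f(x)`,
`f y ≥ f x + ⟨v, y − x⟩ + (μ/2)‖y − x‖²`. -/
def StronglyConvexWith {d : ℕ} (μ : ℝ) (f : EuclideanSpace ℝ (Fin d) → ℝ) : Prop :=
  ∀ x y v, IsSubgradAt f v x → f x + ⟪v, y - x⟫ + μ / 2 * ‖y - x‖ ^ 2 ≤ f y

/-- The discrete Lyapunov function with iteration-varying step sizes. -/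
noncomputable def pdhgLyap {d1 d2 : ℕ}
    (F : EuclideanSpace ℝ (Fin d1) →L[ℝ] EuclideanSpace ℝ (Fin d2))
    (τ σ : ℕ → ℝ) (x : ℕ → EuclideanSpace ℝ (Fin d1)) (y : ℕ → EuclideanSpace ℝ (Fin d2))
    (xs : EuclideanSpace ℝ (Fin d1)) (ys : EuclideanSpace ℝ (Fin d2)) (k : ℕ) : ℝ :=
  ‖x k - xs‖ ^ 2 / (2 * τ k) + ‖y k - ys‖ ^ 2 / (2 * σ k) - ⟪F (x k - xs), y k - ys⟫

/-- The quadratic form `V m` evaluated on increments is nonnegative since `s ‖F‖ ≤ 1`; only the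
lengths `a`, `b` and the cross term `q` matter. -/
lemma lyapForm_nonneg {s c m L a b q : ℝ} (hs : 0 < s) (hc : 0 < c) (hm : 0 < m)
    (hsL : s ^ 2 * L ^ 2 < 1) (ha : 0 ≤ a) (hb : 0 ≤ b) (hq : q ≤ L * a * b) :
    0 ≤ c * m / 2 * a ^ 2 + b ^ 2 / (2 * (c * s ^ 2 * m)) - q := by
  have h1 : s * L ≤ 1 := by nlinarith
  have h2 : L * a * b ≤ a * b / s := by
    rw [le_div_iff₀ hs]
    nlinarith [mul_nonneg ha hb]
  have h3 : c * m / 2 * a ^ 2 + b ^ 2 / (2 * (c * s ^ 2 * m)) - a * b / s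
      = (c * m * s * a - b) ^ 2 / (2 * (c * s ^ 2 * m)) := by
    field_simp
    ring
  have h4 : 0 ≤ (c * m * s * a - b) ^ 2 / (2 * (c * s ^ 2 * m)) := by positivity
  linarith

/-- The surplus left by strong convexity and by the growth of the step sizes dominates
`α/(m+1)` times the Lyapunov function, where `a = ‖X‖`, `b = ‖Y‖`, `p = ⟪F X, Y⟫`. -/
lemma rate_bound {μ s c m L a b p α : ℝ} (hs : 0 < s) (hc : 0 < c) (hm : 0 < m)
    (hp : -p ≤ L * a * b) (hα : 0 ≤ α)
    (hα1 : α * (s + c) ≤ 2 * μ - c) (hα2 : α * (1 + c * s * L ^ 2) ≤ 1) :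
    α / (m + 1) * (c * (m + 1) / 2 * a ^ 2 + b ^ 2 / (2 * (c * s ^ 2 * (m + 1))) - p)
      ≤ (μ - c / 2) * a ^ 2
        + (b ^ 2 / (2 * (c * s ^ 2 * m)) - b ^ 2 / (2 * (c * s ^ 2 * (m + 1)))) := by
  have hn : 0 < m + 1 := by linarith
  -- Young's inequality with weight `s`
  have h1 : -p ≤ (m + 1) * s / 2 * a ^ 2 + L ^ 2 * b ^ 2 / (2 * s * (m + 1)) := by
    have e : (m + 1) * s / 2 * a ^ 2 + L ^ 2 * b ^ 2 / (2 * s * (m + 1)) - L * a * b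
        = ((m + 1) * s * a - L * b) ^ 2 / (2 * s * (m + 1)) := by
      field_simp
      ring
    have : 0 ≤ ((m + 1) * s * a - L * b) ^ 2 / (2 * s * (m + 1)) := by positivity
    linarith
  calc α / (m + 1) * (c * (m + 1) / 2 * a ^ 2 + b ^ 2 / (2 * (c * s ^ 2 * (m + 1))) - p)
      ≤ α / (m + 1) * (c * (m + 1) / 2 * a ^ 2 + b ^ 2 / (2 * (c * s ^ 2 * (m + 1)))
          + ((m + 1) * s / 2 * a ^ 2 + L ^ 2 * b ^ 2 / (2 * s * (m + 1)))) := by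
        apply mul_le_mul_of_nonneg_left _ (by positivity)
        linarith
    _ = α * (s + c) / 2 * a ^ 2
          + α * (1 + c * s * L ^ 2) * (b ^ 2 / (2 * (c * s ^ 2 * (m + 1) ^ 2))) := by
        field_simp
        ring
    _ ≤ (2 * μ - c) / 2 * a ^ 2 + 1 * (b ^ 2 / (2 * (c * s ^ 2 * (m + 1) ^ 2))) := by
        gcongr
    _ ≤ (2 * μ - c) / 2 * a ^ 2 + b ^ 2 / (2 * (c * s ^ 2 * (m * (m + 1)))) := by
        rw [one_mul]
        gcongr
        nlinarith
    _ = _ := by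
        field_simp
        ring

/-- Strong monotonicity of `∂f` between two points of its graph. -/
lemma monotone_primal {d : ℕ} {μ : ℝ} {f : EuclideanSpace ℝ (Fin d) → ℝ}
    (hf : StronglyConvexWith μ f) {v w x z : EuclideanSpace ℝ (Fin d)}
    (hv : IsSubgradAt f v x) (hw : IsSubgradAt f w z) :
    μ * ‖x - z‖ ^ 2 ≤ ⟪v - w, x - z⟫ := by
  have h1 := hf x z v hv
  have h2 := hf z x w hw
  rw [norm_sub_rev z x, ← neg_sub x z, inner_neg_right] at h1
  rw [inner_sub_left]
  linarith

/-- Monotonicity of `∂h` between two points of its graph. -/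
lemma monotone_dual {d : ℕ} {h : EuclideanSpace ℝ (Fin d) → ℝ}
    {v w x z : EuclideanSpace ℝ (Fin d)}
    (hv : IsSubgradAt h v x) (hw : IsSubgradAt h w z) :
    0 ≤ ⟪v - w, x - z⟫ := by
  have h1 := hv z
  have h2 := hw x
  rw [← neg_sub x z, inner_neg_right] at h1
  rw [inner_sub_left]
  linarith

/-- `E(k) ≤ (∏_{j=1}^k (j+1)/(j+1+α)) · E(0)` for the step sizes
`τ_k = 1/(c(k+1))`, `σ_k = c s² (k+1)` with `c ∈ (0, 2μ)`. -/
theorem pdhg_lyapunov_varying_rate {d1 d2 : ℕ} (μ s c : ℝ) (hμ : 0 < μ) (hs : 0 < s)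
    (hc : 0 < c) (hc2 : c < 2 * μ)
    (f : EuclideanSpace ℝ (Fin d1) → ℝ) (hf : StronglyConvexWith μ f)
    (h : EuclideanSpace ℝ (Fin d2) → ℝ) (hconv : ConvexOn ℝ Set.univ h)
    (F : EuclideanSpace ℝ (Fin d1) →L[ℝ] EuclideanSpace ℝ (Fin d2))
    (hsF : s ^ 2 * ‖F‖ ^ 2 < 1)
    (τ σ : ℕ → ℝ)
    (hτ : ∀ k, τ k = 1 / (c * ((k : ℝ) + 1))) (hσ : ∀ k, σ k = c * s ^ 2 * ((k : ℝ) + 1))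
    (x : ℕ → EuclideanSpace ℝ (Fin d1)) (y : ℕ → EuclideanSpace ℝ (Fin d2))
    (xs : EuclideanSpace ℝ (Fin d1)) (ys : EuclideanSpace ℝ (Fin d2))
    (hdesc : ∀ k, IsSubgradAt f
      (-((τ k)⁻¹ • (x (k + 1) - x k) - (ContinuousLinearMap.adjoint F) (y (k + 1) - y k)
          + (ContinuousLinearMap.adjoint F) (y (k + 1)))) (x (k + 1)))
    (hasc : ∀ k, IsSubgradAt h
      (-((σ k)⁻¹ • (y (k + 1) - y k) - F (x (k + 1) - x k) - F (x (k + 1)))) (y (k + 1)))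
    (hsadx : IsSubgradAt f (-(ContinuousLinearMap.adjoint F) ys) xs)
    (hsady : IsSubgradAt h (F xs) ys)
    (α : ℝ) (hα : α = min ((2 * μ - c) / (s + c)) (1 / (1 + c * s * ‖F‖ ^ 2))) :
    ∀ k, pdhgLyap F τ σ x y xs ys k
      ≤ (∏ j ∈ Finset.Icc 1 k, ((j : ℝ) + 1) / ((j : ℝ) + 1 + α))
        * pdhgLyap F τ σ x y xs ys 0 := by
  have hα0 : 0 ≤ α := by
    rw [hα]
    apply le_min
    · exact div_nonneg (by linarith) (by linarith)
    · positivity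
  have hα1 : α * (s + c) ≤ 2 * μ - c := by
    rw [← le_div_iff₀ (by linarith), hα]
    exact min_le_left _ _
  have hα2 : α * (1 + c * s * ‖F‖ ^ 2) ≤ 1 := by
    rw [← le_div_iff₀ (by positivity), hα]
    exact min_le_right _ _
  -- the Lyapunov function as the quadratic form with parameter `k + 1`
  have hE : ∀ k, pdhgLyap F τ σ x y xs ys k
      = c * ((k : ℝ) + 1) / 2 * ‖x k - xs‖ ^ 2
        + ‖y k - ys‖ ^ 2 / (2 * (c * s ^ 2 * ((k : ℝ) + 1))) - ⟪F (x k - xs), y k - ys⟫ := by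
    intro k
    have hk : (0 : ℝ) < (k : ℝ) + 1 := by positivity
    rw [pdhgLyap, hτ, hσ]
    field_simp
  have hcross : ∀ u v, ⟪F u, v⟫ ≤ ‖F‖ * ‖u‖ * ‖v‖ := fun u v =>
    (real_inner_le_norm _ _).trans
      (mul_le_mul_of_nonneg_right (F.le_opNorm u) (norm_nonneg v))
  have hstep : ∀ k : ℕ, (1 + α / (((k : ℝ) + 1) + 1)) * pdhgLyap F τ σ x y xs ys (k + 1)
      ≤ pdhgLyap F τ σ x y xs ys k := by
    intro k
    have hm : (0 : ℝ) < (k : ℝ) + 1 := by positivity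
    have hmx := monotone_primal hf (hdesc k) hsadx
    have hmy := monotone_dual (hasc k) hsady
    rw [hE, hE]
    push_cast
    rw [hτ] at hmx
    rw [hσ] at hmy
    generalize (k : ℝ) + 1 = m at *
    obtain ⟨X, hX⟩ : ∃ X, X = x (k + 1) - xs := ⟨_, rfl⟩
    obtain ⟨Y, hY⟩ : ∃ Y, Y = y (k + 1) - ys := ⟨_, rfl⟩
    obtain ⟨A, hA⟩ : ∃ A, A = x (k + 1) - x k := ⟨_, rfl⟩
    obtain ⟨B, hB⟩ : ∃ B, B = y (k + 1) - y k := ⟨_, rfl⟩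
    have hX0 : x k - xs = X - A := by rw [hX, hA]; abel
    have hY0 : y k - ys = Y - B := by rw [hY, hB]; abel
    have ex : -((1 / (c * m))⁻¹ • (x (k + 1) - x k)
          - (ContinuousLinearMap.adjoint F) (y (k + 1) - y k)
          + (ContinuousLinearMap.adjoint F) (y (k + 1)))
          - -(ContinuousLinearMap.adjoint F) ys
        = (ContinuousLinearMap.adjoint F) B - (ContinuousLinearMap.adjoint F) Y
          - (c * m) • A := by
      rw [one_div, inv_inv, ← hA, ← hB, hY, map_sub _ (y (k + 1)) ys]
      abel
    have ey : -((c * s ^ 2 * m)⁻¹ • (y (k + 1) - y k) - F (x (k + 1) - x k) - F (x (k + 1)))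
          - F xs
        = F A + F X - (c * s ^ 2 * m)⁻¹ • B := by
      rw [← hA, ← hB, hX, map_sub F (x (k + 1)) xs]
      abel
    rw [ex, ← hX, inner_sub_left, inner_sub_left, ContinuousLinearMap.adjoint_inner_left,
      ContinuousLinearMap.adjoint_inner_left, real_inner_smul_left,
      real_inner_comm (F X) B, real_inner_comm (F X) Y] at hmx
    rw [ey, ← hY, inner_sub_left, inner_add_left, real_inner_smul_left] at hmy
    rw [hX0, hY0, ← hX, ← hY, map_sub, inner_sub_left, inner_sub_right, inner_sub_right,
      norm_sub_sq_real, norm_sub_sq_real, real_inner_comm A X, real_inner_comm B Y]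
    have hV := lyapForm_nonneg hs hc hm hsF (norm_nonneg A) (norm_nonneg B)
      (hcross A B)
    have hp : -⟪F X, Y⟫ ≤ ‖F‖ * ‖X‖ * ‖Y‖ := by
      have := hcross X (-Y)
      rwa [inner_neg_right, norm_neg] at this
    have hR := rate_bound (μ := μ) hs hc hm hp hα0 hα1 hα2
    have e1 : (‖Y‖ ^ 2 - 2 * ⟪B, Y⟫ + ‖B‖ ^ 2) / (2 * (c * s ^ 2 * m))
        = ‖Y‖ ^ 2 / (2 * (c * s ^ 2 * m)) - (c * s ^ 2 * m)⁻¹ * ⟪B, Y⟫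
          + ‖B‖ ^ 2 / (2 * (c * s ^ 2 * m)) := by
      field_simp
    rw [e1, add_mul, one_mul]
    linarith
  intro k
  induction k with
  | zero => simp
  | succ k ih =>
    rw [Finset.prod_Icc_succ_top (by omega), mul_comm (∏ j ∈ _, _), mul_assoc]
    push_cast
    have hn : (0 : ℝ) < (k : ℝ) + 1 + 1 := by positivity
    have hnα : (0 : ℝ) < (k : ℝ) + 1 + 1 + α := by linarith
    have h1 := (hstep k).trans ih
    have h2 := mul_le_mul_of_nonneg_left h1 (div_nonneg hn.le hnα.le)
    have e : ((k : ℝ) + 1 + 1) / ((k : ℝ) + 1 + 1 + α) * ((1 + α / ((k : ℝ) + 1 + 1))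
        * pdhgLyap F τ σ x y xs ys (k + 1)) = pdhgLyap F τ σ x y xs ys (k + 1) := by
      field_simp
    rwa [e] at h2
end

section
/- Let f : ℝ^{d1} → ℝ be μ-strongly convex (μ > 0), h : ℝ^{d2} → ℝ convex, F ∈ ℝ^{d2×d1}, and s > 0 with s²‖F‖² < 1. Let step sizes τ_k, σ_k > 0 and parameters θ_k satisfy τ_{k+1} σ_k = s² and τ_{k+1} = θ_k τ_k for all k. Suppose sequences (x_k), (y_k) satisfy the accelerated PDHG optimality inclusions −[(x_{k+1} − x_k)/τ_k + Fᵀ y_k] ∈ ∂f(x_{k+1}) and −[(y_{k+1} − y_k)/σ_k − θ_k F(x_{k+1} − x_k) − F x_{k+1}] ∈ ∂h(y_{k+1}), and that −Fᵀ y* ∈ ∂f(x*) and F x* ∈ ∂h(y*). Define, for k ≥ 1, E(k) = ‖x_k − x*‖²/(2τ_k²) + ‖y_{k−1} − y*‖²/(2s²) + ⟨F(x_k − x_{k−1}), y_{k−1} − y*⟩/τ_{k−1} + ‖x_k − x_{k−1}‖²/(2τ_{k−1}²). Then for every k ≥ 1, E(k+1) − E(k) ≤ −(μ/τ_k + 1/(2τ_k²)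 − 1/(2τ_{k+1}²))‖x_{k+1} − x*‖². -/
/-!
Write `a = x_k − x*`, `X = x_{k+1} − x*`, `b = y_{k-1} − y*`, `Y = y_k − y*`, `D = x_k − x_{k-1}`.
After expanding `‖X‖² − ‖a‖²` and `‖Y‖² − ‖b‖²`, the difference `E(k+1) − E(k)` is controlled by two
monotonicity inequalities, both divided by `τ_k`: strong monotonicity of `∂f` between `x_{k+1}` and
`x*`, and monotonicity of `∂h` between `y_k` and `y*`, the latter using the dual step of index `k-1`,
where `τ_k σ_{k-1} = s²` and `θ_{k-1} = τ_k / τ_{k-1}`. The coupling terms cancel except for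
`⟨F D, Y − b⟩ / τ_{k-1}`, which is absorbed by `‖Y − b‖² / (2 s²) + ‖D‖² / (2 τ_{k-1}²)` because
`s ‖F‖ < 1`.
-/

open scoped RealInnerProductSpace

/-- Novel discrete Lyapunov function for the accelerated PDHG setting (for `k ≥ 1`):
`E(k) = ‖x_k − x*‖²/(2τ_k²) + ‖y_{k−1} − y*‖²/(2s²)
        + ⟨F(x_k − x_{k−1}), y_{k−1} − y*⟩/τ_{k−1} + ‖x_k − x_{k−1}‖²/(2τ_{k−1}²)`. -/
noncomputable def accLyap {d1 d2 : ℕ}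
    (F : EuclideanSpace ℝ (Fin d1) →L[ℝ] EuclideanSpace ℝ (Fin d2))
    (τ : ℕ → ℝ) (s : ℝ)
    (x : ℕ → EuclideanSpace ℝ (Fin d1)) (y : ℕ → EuclideanSpace ℝ (Fin d2))
    (xs : EuclideanSpace ℝ (Fin d1)) (ys : EuclideanSpace ℝ (Fin d2)) (k : ℕ) : ℝ :=
  ‖x k - xs‖ ^ 2 / (2 * (τ k) ^ 2) + ‖y (k - 1) - ys‖ ^ 2 / (2 * s ^ 2)
    + ⟪F (x k - x (k - 1)), y (k - 1) - ys⟫ / τ (k - 1)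
    + ‖x k - x (k - 1)‖ ^ 2 / (2 * (τ (k - 1)) ^ 2)

/-- Strong monotonicity of the subdifferential of a strongly convex function. -/
lemma StronglyConvexWith.monotone {d : ℕ} {μ : ℝ} {f : EuclideanSpace ℝ (Fin d) → ℝ}
    (hf : StronglyConvexWith μ f) {u v p q : EuclideanSpace ℝ (Fin d)}
    (hu : IsSubgradAt f u p) (hv : IsSubgradAt f v q) :
    μ * ‖p - q‖ ^ 2 ≤ ⟪u - v, p - q⟫ := by
  have h1 := hf p q u hu
  have h2 := hf q p v hv
  rw [norm_sub_rev q p, ← neg_sub p q, inner_neg_right] at h1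
  rw [inner_sub_left]
  linarith

lemma IsSubgradAt.monotone {d : ℕ} {f : EuclideanSpace ℝ (Fin d) → ℝ}
    {u v p q : EuclideanSpace ℝ (Fin d)}
    (hu : IsSubgradAt f u p) (hv : IsSubgradAt f v q) :
    0 ≤ ⟪u - v, p - q⟫ := by
  have h1 := hu q
  have h2 := hv p
  rw [← neg_sub p q, inner_neg_right] at h1
  rw [inner_sub_left]
  linarith

/-- The Young-type bound that absorbs the remaining coupling term. -/
lemma inner_map_div_le {d1 d2 : ℕ} {s t : ℝ} (hs : 0 < s) (ht : 0 < t)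
    (F : EuclideanSpace ℝ (Fin d1) →L[ℝ] EuclideanSpace ℝ (Fin d2))
    (hsF : s ^ 2 * ‖F‖ ^ 2 < 1) (D : EuclideanSpace ℝ (Fin d1)) (w : EuclideanSpace ℝ (Fin d2)) :
    ⟪F D, w⟫ / t ≤ ‖w‖ ^ 2 / (2 * s ^ 2) + ‖D‖ ^ 2 / (2 * t ^ 2) := by
  have hsF1 : s * ‖F‖ ≤ 1 := by
    have : 0 ≤ s * ‖F‖ := by positivity
    nlinarith
  have h1 : ⟪F D, w⟫ ≤ ‖F‖ * ‖D‖ * ‖w‖ :=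
    (real_inner_le_norm _ _).trans (by gcongr; exact F.le_opNorm D)
  have h2 : s * ⟪F D, w⟫ ≤ ‖D‖ * ‖w‖ := by
    calc s * ⟪F D, w⟫ ≤ s * (‖F‖ * ‖D‖ * ‖w‖) := by gcongr
      _ = (s * ‖F‖) * (‖D‖ * ‖w‖) := by ring
      _ ≤ 1 * (‖D‖ * ‖w‖) := by gcongr
      _ = ‖D‖ * ‖w‖ := one_mul _
  have h3 : ⟪F D, w⟫ / t ≤ (‖D‖ / t) * (‖w‖ / s) := by
    rw [div_mul_div_comm, div_le_div_iff₀ ht (by positivity)]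
    nlinarith
  have h4 : ‖w‖ ^ 2 / (2 * s ^ 2) + ‖D‖ ^ 2 / (2 * t ^ 2)
      = ((‖w‖ / s) ^ 2 + (‖D‖ / t) ^ 2) / 2 := by
    field_simp
  rw [h4]
  nlinarith [sq_nonneg (‖D‖ / t - ‖w‖ / s)]

/-- Lemma 4.1: one-step decrease of the accelerated Lyapunov function
under `τ_{k+1}σ_k = s²` and `τ_{k+1} = θ_k τ_k`. -/
theorem acc_pdhg_lyapunov_decrease {d1 d2 : ℕ} (μ s : ℝ) (hμ : 0 < μ) (hs : 0 < s)
    (f : EuclideanSpace ℝ (Fin d1) → ℝ) (hf : StronglyConvexWith μ f)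
    (h : EuclideanSpace ℝ (Fin d2) → ℝ) (hconv : ConvexOn ℝ Set.univ h)
    (F : EuclideanSpace ℝ (Fin d1) →L[ℝ] EuclideanSpace ℝ (Fin d2))
    (hsF : s ^ 2 * ‖F‖ ^ 2 < 1)
    (τ σ θ : ℕ → ℝ) (hτ : ∀ k, 0 < τ k) (hσ : ∀ k, 0 < σ k)
    (hτσ : ∀ k, τ (k + 1) * σ k = s ^ 2) (hθ : ∀ k, τ (k + 1) = θ k * τ k)
    (x : ℕ → EuclideanSpace ℝ (Fin d1)) (y : ℕ → EuclideanSpace ℝ (Fin d2))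
    (xs : EuclideanSpace ℝ (Fin d1)) (ys : EuclideanSpace ℝ (Fin d2))
    (hdesc : ∀ k, IsSubgradAt f
      (-((τ k)⁻¹ • (x (k + 1) - x k) + (ContinuousLinearMap.adjoint F) (y k))) (x (k + 1)))
    (hasc : ∀ k, IsSubgradAt h
      (-((σ k)⁻¹ • (y (k + 1) - y k) - θ k • F (x (k + 1) - x k) - F (x (k + 1))))
      (y (k + 1)))
    (hsadx : IsSubgradAt f (-(ContinuousLinearMap.adjoint F) ys) xs)
    (hsady : IsSubgradAt h (F xs) ys) :
    ∀ k, 1 ≤ k →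
      accLyap F τ s x y xs ys (k + 1) - accLyap F τ s x y xs ys k
        ≤ -(μ / τ k + 1 / (2 * (τ k) ^ 2) - 1 / (2 * (τ (k + 1)) ^ 2))
            * ‖x (k + 1) - xs‖ ^ 2 := by
  intro k hk
  obtain ⟨n, rfl⟩ : ∃ n, k = n + 1 := ⟨k - 1, by omega⟩
  have hf1 := hf.monotone (hdesc (n + 1)) hsadx
  have hh1 := (hasc n).monotone hsady
  have hY := inner_map_div_le hs (hτ n) F hsF (x (n + 1) - x n) (y (n + 1) - y n)
  simp only [accLyap, Nat.add_sub_cancel]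
  have hθn : θ n = τ (n + 1) / τ n := by
    rw [hθ n, mul_div_cancel_right₀ _ (hτ n).ne']
  have hσn : (σ n)⁻¹ = τ (n + 1) / s ^ 2 := by
    rw [← hτσ n]
    have := hτ (n + 1)
    have := hσ n
    field_simp
  rw [hθn, hσn] at hh1
  have ht := hτ n
  have hT := hτ (n + 1)
  have hT2 := hτ (n + 1 + 1)
  generalize τ (n + 1 + 1) = T2 at *
  generalize τ (n + 1) = T at *
  generalize τ n = t at *
  -- Recenter at the saddle point, keeping only the increment `D` of the previous primal step.
  obtain ⟨X, hX⟩ : ∃ X, X = x (n + 1 + 1) - xs := ⟨_, rfl⟩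
  obtain ⟨a, ha⟩ : ∃ a, a = x (n + 1) - xs := ⟨_, rfl⟩
  obtain ⟨Y, hYd⟩ : ∃ Y, Y = y (n + 1) - ys := ⟨_, rfl⟩
  obtain ⟨b, hb⟩ : ∃ b, b = y n - ys := ⟨_, rfl⟩
  obtain ⟨D, hD⟩ : ∃ D, D = x (n + 1) - x n := ⟨_, rfl⟩
  have e1 : x (n + 1 + 1) - x (n + 1) = X - a := by rw [hX, ha]; abel
  have e2 : y (n + 1) - y n = Y - b := by rw [hYd, hb]; abel
  have hf2 : μ * ‖X‖ ^ 2 ≤ -(T⁻¹ * ⟪X - a, X⟫) - ⟪F X, Y⟫ := by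
    have e : -(T⁻¹ • (x (n + 1 + 1) - x (n + 1)) + (ContinuousLinearMap.adjoint F) (y (n + 1)))
        - -(ContinuousLinearMap.adjoint F) ys
        = -(T⁻¹ • (X - a)) - (ContinuousLinearMap.adjoint F) Y := by
      rw [e1, hYd, map_sub]; abel
    rw [e, ← hX, inner_sub_left, inner_neg_left, real_inner_smul_left,
      ContinuousLinearMap.adjoint_inner_left, real_inner_comm (F X) Y] at hf1
    exact hf1
  have hh2 : 0 ≤ -(T / s ^ 2 * ⟪Y - b, Y⟫) + T / t * ⟪F D, Y⟫ + ⟪F a, Y⟫ := by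
    have e : -((T / s ^ 2) • (y (n + 1) - y n) - (T / t) • F (x (n + 1) - x n) - F (x (n + 1)))
        - F xs = -((T / s ^ 2) • (Y - b)) + (T / t) • F D + F a := by
      rw [e2, ha, ← hD, map_sub]; abel
    rwa [e, ← hYd, inner_add_left, inner_add_left, inner_neg_left, real_inner_smul_left,
      real_inner_smul_left] at hh1
  rw [e2, ← hD] at hY
  rw [e1, ← hX, ← ha, ← hYd, ← hb, ← hD]
  have hf3 := div_le_div_of_nonneg_right hf2 hT.le
  have hh3 := div_nonneg hh2 hT.le
  have nY : ‖Y - b‖ ^ 2 = ‖Y‖ ^ 2 - 2 * ⟪b, Y⟫ + ‖b‖ ^ 2 := by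
    rw [norm_sub_sq_real, real_inner_comm]
  have nX : ‖X - a‖ ^ 2 = ‖X‖ ^ 2 - 2 * ⟪a, X⟫ + ‖a‖ ^ 2 := by
    rw [norm_sub_sq_real, real_inner_comm]
  rw [inner_sub_right, nY] at hY
  rw [nX, map_sub, inner_sub_left]
  rw [inner_sub_left, real_inner_self_eq_norm_sq] at hf3 hh3
  -- With all vectors reduced to scalars, the claim is the sum of the three inequalities.
  have key : -(μ / T + 1 / (2 * T ^ 2) - 1 / (2 * T2 ^ 2)) * ‖X‖ ^ 2
      - (‖X‖ ^ 2 / (2 * T2 ^ 2) + ‖Y‖ ^ 2 / (2 * s ^ 2) + (⟪F X, Y⟫ - ⟪F a, Y⟫) / T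
        + (‖X‖ ^ 2 - 2 * ⟪a, X⟫ + ‖a‖ ^ 2) / (2 * T ^ 2)
        - (‖a‖ ^ 2 / (2 * T ^ 2) + ‖b‖ ^ 2 / (2 * s ^ 2) + ⟪F D, b⟫ / t + ‖D‖ ^ 2 / (2 * t ^ 2)))
      = ((-(T⁻¹ * (‖X‖ ^ 2 - ⟪a, X⟫)) - ⟪F X, Y⟫) / T - μ * ‖X‖ ^ 2 / T)
        + (-(T / s ^ 2 * (‖Y‖ ^ 2 - ⟪b, Y⟫)) + T / t * ⟪F D, Y⟫ + ⟪F a, Y⟫) / T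
        + ((‖Y‖ ^ 2 - 2 * ⟪b, Y⟫ + ‖b‖ ^ 2) / (2 * s ^ 2) + ‖D‖ ^ 2 / (2 * t ^ 2)
          - (⟪F D, Y⟫ - ⟪F D, b⟫) / t) := by
    field_simp
    ring
  linarith
end

section
/- Let f : ℝ^{d1} → ℝ be μ-strongly convex and h : ℝ^{d2} → ℝ be γ-strongly convex (μ, γ > 0), F ∈ ℝ^{d2×d1}, s > 0 with s‖F‖ < 1, and take the optimal step sizes τ = s·√(γ/μ), σ = s·√(μ/γ). Suppose (x_k), (y_k) satisfy the fixed-step PDHG inclusions −[(x_{k+1} − x_k)/τ − Fᵀ(y_{k+1} − y_k) + Fᵀ y_{k+1}] ∈ ∂f(x_{k+1}), −[(y_{k+1} − y_k)/σ − F(x_{k+1} − x_k) − F x_{k+1}] ∈ ∂h(y_{k+1}), and that −Fᵀ y* ∈ ∂f(x*), F x* ∈ ∂h(y*). With E(k) = ‖x_k − x*‖²/(2τ) + ‖y_k − y*‖²/(2σ) − ⟨F(x_k − x*), y_k − y*⟩, for every k ≥ 0: E(k) ≤ ((1 + s‖F‖)/(1 + s‖F‖ + 2s√(μγ)))^k ·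 E(0). -/
/-!
Write `a = x - x*`, `b = y - y*` and let `E(a, b) = ‖a‖²/(2τ) + ‖b‖²/(2σ) - ⟨F a, b⟩` be the quadratic
form behind the Lyapunov function. Strong monotonicity of `∂f` and `∂h`, applied to the iterate
`z₊ = (a₊, b₊)` and the saddle point, says after adding the two inequalities that the symmetric
bilinear form `B` with `B(z, z) = 2E(z)` satisfies `B(z₊ - z, z₊) ≤ -(μ‖a₊‖² + γ‖b₊‖²)`, and
`B(z₊ - z, z₊) = E(z₊) - E(z) + E(z₊ - z)`. Since `τσ = s²`, Cauchy-Schwarz and AM-GM give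
`|⟨F a, b⟩| ≤ s‖F‖ (‖a‖²/(2τ) + ‖b‖²/(2σ))` (`abs_inner_le_weighted`), which yields both
`E(z₊ - z) ≥ 0` and `E(z₊) ≤ (1 + s‖F‖)(‖a₊‖²/(2τ) + ‖b₊‖²/(2σ))`. The step sizes are chosen so that
`μ‖a‖² + γ‖b‖² = 2s√(μγ) (‖a‖²/(2τ) + ‖b‖²/(2σ))`, so
`(1 + s‖F‖ + 2s√(μγ)) E(z₊) ≤ (1 + s‖F‖) E(z)`.
-/

open scoped RealInnerProductSpace

/-- The discrete Lyapunov function for fixed-step PDHG: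
`E(k) = ‖x_k − x*‖²/(2τ) + ‖y_k − y*‖²/(2σ) − ⟨F(x_k − x*), y_k − y*⟩`. -/
noncomputable def pdhgLyapFixed {d1 d2 : ℕ}
    (F : EuclideanSpace ℝ (Fin d1) →L[ℝ] EuclideanSpace ℝ (Fin d2))
    (τ σ : ℝ) (x : ℕ → EuclideanSpace ℝ (Fin d1)) (y : ℕ → EuclideanSpace ℝ (Fin d2))
    (xs : EuclideanSpace ℝ (Fin d1)) (ys : EuclideanSpace ℝ (Fin d2)) (k : ℕ) : ℝ :=
  ‖x k - xs‖ ^ 2 / (2 * τ) + ‖y k - ys‖ ^ 2 / (2 * σ) - ⟪F (x k - xs), y k - ys⟫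

/-- Strong monotonicity of the subdifferential of a strongly convex function. -/
lemma StronglyConvexWith.mono_subgrad {d : ℕ} {μ : ℝ} {f : EuclideanSpace ℝ (Fin d) → ℝ}
    (hf : StronglyConvexWith μ f) {u v x y : EuclideanSpace ℝ (Fin d)}
    (hu : IsSubgradAt f u x) (hv : IsSubgradAt f v y) :
    μ * ‖x - y‖ ^ 2 ≤ ⟪u - v, x - y⟫ := by
  have h1 := hf x y u hu
  have h2 := hf y x v hv
  rw [norm_sub_rev y x, ← neg_sub x y, inner_neg_right] at h1
  rw [inner_sub_left]
  linarith

/-- The coupling term is dominated by the diagonal part of the Lyapunov form; the step sizes are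
parametrized by `p = √μ` and `q = √γ`. -/
lemma abs_inner_le_weighted {d1 d2 : ℕ} {s p q : ℝ} (hs : 0 < s) (hp : 0 < p) (hq : 0 < q)
    (F : EuclideanSpace ℝ (Fin d1) →L[ℝ] EuclideanSpace ℝ (Fin d2))
    (a : EuclideanSpace ℝ (Fin d1)) (b : EuclideanSpace ℝ (Fin d2)) :
    |⟪F a, b⟫| ≤ s * ‖F‖ * (‖a‖ ^ 2 / (2 * (s * (q / p))) + ‖b‖ ^ 2 / (2 * (s * (p / q)))) := by
  have h1 : |⟪F a, b⟫| ≤ ‖F‖ * (‖a‖ * ‖b‖) := by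
    calc |⟪F a, b⟫| ≤ ‖F a‖ * ‖b‖ := abs_real_inner_le_norm _ _
      _ ≤ (‖F‖ * ‖a‖) * ‖b‖ := by gcongr; exact F.le_opNorm a
      _ = _ := by ring
  have h2 : ‖a‖ * ‖b‖ ≤ s * (‖a‖ ^ 2 / (2 * (s * (q / p))) + ‖b‖ ^ 2 / (2 * (s * (p / q)))) := by
    have e : s * (‖a‖ ^ 2 / (2 * (s * (q / p))) + ‖b‖ ^ 2 / (2 * (s * (p / q))))
        = ((p * ‖a‖) ^ 2 + (q * ‖b‖) ^ 2) / (2 * (p * q)) := by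
      field_simp
    rw [e, le_div_iff₀ (by positivity)]
    nlinarith [sq_nonneg (p * ‖a‖ - q * ‖b‖)]
  calc _ ≤ _ := h1
    _ ≤ ‖F‖ * (s * (‖a‖ ^ 2 / (2 * (s * (q / p))) + ‖b‖ ^ 2 / (2 * (s * (p / q))))) := by gcongr
    _ = _ := by ring

/-- Theorem 5.2, Lyapunov part: with optimal step sizes `τ = s√(γ/μ)`,
`σ = s√(μ/γ)`, the fixed-step PDHG Lyapunov function contracts linearly:
`E(k) ≤ ((1 + s‖F‖)/(1 + s‖F‖ + 2s√(μγ)))^k · E(0)`. -/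
theorem pdhg_strong_strong_linear_rate {d1 d2 : ℕ} (μ γ s τ σ : ℝ)
    (hμ : 0 < μ) (hγ : 0 < γ) (hs : 0 < s)
    (hτ : τ = s * Real.sqrt (γ / μ)) (hσ : σ = s * Real.sqrt (μ / γ))
    (f : EuclideanSpace ℝ (Fin d1) → ℝ) (hf : StronglyConvexWith μ f)
    (h : EuclideanSpace ℝ (Fin d2) → ℝ) (hh : StronglyConvexWith γ h)
    (F : EuclideanSpace ℝ (Fin d1) →L[ℝ] EuclideanSpace ℝ (Fin d2))
    (hsF : s * ‖F‖ < 1)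
    (x : ℕ → EuclideanSpace ℝ (Fin d1)) (y : ℕ → EuclideanSpace ℝ (Fin d2))
    (xs : EuclideanSpace ℝ (Fin d1)) (ys : EuclideanSpace ℝ (Fin d2))
    (hdesc : ∀ k, IsSubgradAt f
      (-(τ⁻¹ • (x (k + 1) - x k) - (ContinuousLinearMap.adjoint F) (y (k + 1) - y k)
          + (ContinuousLinearMap.adjoint F) (y (k + 1)))) (x (k + 1)))
    (hasc : ∀ k, IsSubgradAt h
      (-(σ⁻¹ • (y (k + 1) - y k) - F (x (k + 1) - x k) - F (x (k + 1)))) (y (k + 1)))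
    (hsadx : IsSubgradAt f (-(ContinuousLinearMap.adjoint F) ys) xs)
    (hsady : IsSubgradAt h (F xs) ys) :
    ∀ k, pdhgLyapFixed F τ σ x y xs ys k
      ≤ ((1 + s * ‖F‖) / (1 + s * ‖F‖ + 2 * s * Real.sqrt (μ * γ))) ^ k
        * pdhgLyapFixed F τ σ x y xs ys 0 := by
  obtain ⟨p, hp, rfl⟩ : ∃ p : ℝ, 0 < p ∧ μ = p ^ 2 :=
    ⟨√μ, Real.sqrt_pos.2 hμ, (Real.sq_sqrt hμ.le).symm⟩
  obtain ⟨q, hq, rfl⟩ : ∃ q : ℝ, 0 < q ∧ γ = q ^ 2 :=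
    ⟨√γ, Real.sqrt_pos.2 hγ, (Real.sq_sqrt hγ.le).symm⟩
  rw [← div_pow, Real.sqrt_sq (by positivity)] at hτ hσ
  rw [← mul_pow, Real.sqrt_sq (by positivity)]
  have hD : 0 < 1 + s * ‖F‖ + 2 * s * (p * q) := by positivity
  have hτ0 : 0 < τ := by rw [hτ]; positivity
  have hσ0 : 0 < σ := by rw [hσ]; positivity
  have coup : ∀ a b, |⟪F a, b⟫| ≤ s * ‖F‖ * (‖a‖ ^ 2 / (2 * τ) + ‖b‖ ^ 2 / (2 * σ)) := by
    intro a b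
    rw [hτ, hσ]
    exact abs_inner_le_weighted hs hp hq F a b
  have step : ∀ k, pdhgLyapFixed F τ σ x y xs ys (k + 1)
      ≤ (1 + s * ‖F‖) / (1 + s * ‖F‖ + 2 * s * (p * q)) * pdhgLyapFixed F τ σ x y xs ys k := by
    intro k
    have h1 := hf.mono_subgrad (hdesc k) hsadx
    have h2 := hh.mono_subgrad (hasc k) hsady
    unfold pdhgLyapFixed
    obtain ⟨a, ha⟩ : ∃ a, a = x (k + 1) - xs := ⟨_, rfl⟩
    obtain ⟨b, hb⟩ : ∃ b, b = y (k + 1) - ys := ⟨_, rfl⟩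
    obtain ⟨a', ha'⟩ : ∃ a', a' = x k - xs := ⟨_, rfl⟩
    obtain ⟨b', hb'⟩ : ∃ b', b' = y k - ys := ⟨_, rfl⟩
    have e1 : -(τ⁻¹ • (x (k + 1) - x k) - (ContinuousLinearMap.adjoint F) (y (k + 1) - y k)
          + (ContinuousLinearMap.adjoint F) (y (k + 1))) - -(ContinuousLinearMap.adjoint F) ys
        = -(τ⁻¹ • (a - a')) - (ContinuousLinearMap.adjoint F) b' := by
      rw [ha, ha', hb']
      simp only [map_sub]
      module
    have e2 : -(σ⁻¹ • (y (k + 1) - y k) - F (x (k + 1) - x k) - F (x (k + 1))) - F xs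
        = -(σ⁻¹ • (b - b')) + (F a + F a - F a') := by
      rw [ha, ha', hb, hb']
      simp only [map_sub]
      module
    rw [e1, ← ha] at h1
    rw [e2, ← hb] at h2
    rw [← ha, ← hb, ← ha', ← hb']
    simp only [inner_sub_left, inner_add_left, inner_neg_left, real_inner_smul_left,
      ContinuousLinearMap.adjoint_inner_left, real_inner_self_eq_norm_sq] at h1 h2
    rw [real_inner_comm (F a) b'] at h1
    have c1 := (abs_le.1 (coup (a - a') (b - b'))).2
    have c2 := (abs_le.1 (coup a b)).1
    have n1 : ‖a - a'‖ ^ 2 = ‖a‖ ^ 2 - 2 * ⟪a', a⟫ + ‖a'‖ ^ 2 := by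
      rw [norm_sub_sq_real, real_inner_comm]
    have n2 : ‖b - b'‖ ^ 2 = ‖b‖ ^ 2 - 2 * ⟪b', b⟫ + ‖b'‖ ^ 2 := by
      rw [norm_sub_sq_real, real_inner_comm]
    -- `E(z₊ - z) ≥ 0`, because `s‖F‖ < 1`.
    have c3 : ⟪F (a - a'), b - b'⟫ ≤ ‖a - a'‖ ^ 2 / (2 * τ) + ‖b - b'‖ ^ 2 / (2 * σ) :=
      c1.trans (mul_le_of_le_one_left (by positivity) hsF.le)
    rw [n1, n2] at c3
    simp only [map_sub, inner_sub_left, inner_sub_right] at c3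
    have key : p ^ 2 * ‖a‖ ^ 2 + q ^ 2 * ‖b‖ ^ 2
        = 2 * s * (p * q) * (‖a‖ ^ 2 / (2 * τ) + ‖b‖ ^ 2 / (2 * σ)) := by
      rw [hτ, hσ]; field_simp
    have hdec : (‖a‖ ^ 2 / (2 * τ) + ‖b‖ ^ 2 / (2 * σ) - ⟪F a, b⟫)
        + 2 * s * (p * q) * (‖a‖ ^ 2 / (2 * τ) + ‖b‖ ^ 2 / (2 * σ))
        ≤ ‖a'‖ ^ 2 / (2 * τ) + ‖b'‖ ^ 2 / (2 * σ) - ⟪F a', b'⟫ := by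
      rw [← key]
      have d1 : ∀ t : ℝ, t / (2 * τ) = τ⁻¹ * t / 2 := by intro t; field_simp
      have d2 : ∀ t : ℝ, t / (2 * σ) = σ⁻¹ * t / 2 := by intro t; field_simp
      simp only [d1, d2] at c3 ⊢
      linarith
    generalize ‖a‖ ^ 2 / (2 * τ) + ‖b‖ ^ 2 / (2 * σ) = N at *
    generalize ‖a'‖ ^ 2 / (2 * τ) + ‖b'‖ ^ 2 / (2 * σ) - ⟪F a', b'⟫ = E' at *
    rw [div_mul_eq_mul_div, le_div_iff₀ hD]
    have m1 := mul_le_mul_of_nonneg_left hdec (by positivity : 0 ≤ 1 + s * ‖F‖)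
    have m2 : 2 * s * (p * q) * (N - ⟪F a, b⟫) ≤ 2 * s * (p * q) * ((1 + s * ‖F‖) * N) :=
      mul_le_mul_of_nonneg_left (by linarith) (by positivity)
    linarith
  intro k
  induction k with
  | zero => simp
  | succ k ih =>
    calc _ ≤ _ := step k
      _ ≤ _ := mul_le_mul_of_nonneg_left ih (by positivity)
      _ = _ := by ring
end

section
/- Let f : ℝ^{d1} → ℝ be μ-strongly convex and h : ℝ^{d2} → ℝ be γ-strongly convex (μ, γ > 0), F ∈ ℝ^{d2×d1}, s > 0 with s‖F‖ < 1, and take step sizes τ = s·√(γ/μ), σ = s·√(μ/γ). Suppose (x_k), (y_k) satisfy the fixed-step PDHG inclusions −[(x_{k+1} − x_k)/τ − Fᵀ(y_{k+1} − y_k) + Fᵀ y_{k+1}] ∈ ∂f(x_{k+1}), −[(y_{k+1} − y_k)/σ − F(x_{k+1} − x_k) − F x_{k+1}] ∈ ∂h(y_{k+1}), and that −Fᵀ y* ∈ ∂f(x*), F x* ∈ ∂h(y*). Then for every k ≥ 0: μ‖x_k − x*‖² + γ‖y_k − y*‖² ≤ ((1 + s‖F‖)/(1 − s‖F‖)) ·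 ((1 + s‖F‖)/(1 + s‖F‖ + 2s√(μγ)))^k · (μ‖x_0 − x*‖² + γ‖y_0 − y*‖²). -/
/-!
PDHG is a proximal-point iteration in the metric `M = [[1/τ, -Fᵀ], [-F, 1/σ]]`. With the given step
sizes, `s√(μγ) M` has the quadratic form
`G(a, b) = μ‖a‖² + γ‖b‖² - 2 s √(μγ) ⟪F a, b⟫` (`pdhgEnergy`), and Cauchy–Schwarz together with
AM-GM gives `(1 - s‖F‖) D ≤ G ≤ (1 + s‖F‖) D` for `D = μ‖a‖² + γ‖b‖²`. Strong monotonicity of the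
subdifferentials and `G ≥ 0` at the difference of consecutive iterates give
`G(z_{k+1}) + 2 s √(μγ) D(z_{k+1}) ≤ G(z_k)`, where `z_k` is the error of the `k`-th iterate. Bounding
`D` below by `G / (1 + s‖F‖)` makes `G` contract geometrically, and the two-sided comparison of `G`
with `D` transfers the rate to `D`.
-/

open scoped RealInnerProductSpace

/-- Strong convexity makes the subdifferential strongly monotone. -/
lemma StronglyConvexWith.inner_sub_ge {d : ℕ} {μ : ℝ} {f : EuclideanSpace ℝ (Fin d) → ℝ}
    (hf : StronglyConvexWith μ f) {u v x z : EuclideanSpace ℝ (Fin d)}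
    (hu : IsSubgradAt f u x) (hv : IsSubgradAt f v z) :
    μ * ‖x - z‖ ^ 2 ≤ ⟪u - v, x - z⟫ := by
  have h1 := hf x z u hu
  have h2 := hf z x v hv
  rw [← neg_sub x z, inner_neg_right, norm_neg] at h1
  rw [inner_sub_left]
  linarith

section Energy

variable {V W : Type*} [NormedAddCommGroup V] [InnerProductSpace ℝ V]
  [NormedAddCommGroup W] [InnerProductSpace ℝ W]

/-- The squared PDHG metric norm of `(a, b)`, scaled by `s √(μγ)`, where `p = √μ` and `q = √γ`. -/
def pdhgEnergy (p q s : ℝ) (F : V →L[ℝ] W) (a : V) (b : W) : ℝ :=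
  p ^ 2 * ‖a‖ ^ 2 + q ^ 2 * ‖b‖ ^ 2 - 2 * (s * (p * q)) * ⟪F a, b⟫

lemma abs_coupling_le {p q s : ℝ} (hp : 0 < p) (hq : 0 < q) (hs : 0 < s) (F : V →L[ℝ] W)
    (a : V) (b : W) :
    |2 * (s * (p * q)) * ⟪F a, b⟫| ≤ s * ‖F‖ * (p ^ 2 * ‖a‖ ^ 2 + q ^ 2 * ‖b‖ ^ 2) := by
  have h1 : |⟪F a, b⟫| ≤ ‖F‖ * ‖a‖ * ‖b‖ :=
    (abs_real_inner_le_norm _ _).trans (by gcongr; exact F.le_opNorm a)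
  have hc : 0 < 2 * (s * (p * q)) := by positivity
  rw [abs_mul, abs_of_pos hc]
  calc 2 * (s * (p * q)) * |⟪F a, b⟫| ≤ 2 * (s * (p * q)) * (‖F‖ * ‖a‖ * ‖b‖) := by gcongr
    _ = s * ‖F‖ * (2 * (p * ‖a‖) * (q * ‖b‖)) := by ring
    _ ≤ s * ‖F‖ * ((p * ‖a‖) ^ 2 + (q * ‖b‖) ^ 2) := by
      gcongr
      exact two_mul_le_add_sq _ _
    _ = _ := by ring

lemma le_pdhgEnergy {p q s : ℝ} (hp : 0 < p) (hq : 0 < q) (hs : 0 < s) (F : V →L[ℝ] W)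
    (a : V) (b : W) :
    (1 - s * ‖F‖) * (p ^ 2 * ‖a‖ ^ 2 + q ^ 2 * ‖b‖ ^ 2) ≤ pdhgEnergy p q s F a b := by
  have := (abs_le.mp (abs_coupling_le hp hq hs F a b)).2
  unfold pdhgEnergy
  linarith

lemma pdhgEnergy_le {p q s : ℝ} (hp : 0 < p) (hq : 0 < q) (hs : 0 < s) (F : V →L[ℝ] W)
    (a : V) (b : W) :
    pdhgEnergy p q s F a b ≤ (1 + s * ‖F‖) * (p ^ 2 * ‖a‖ ^ 2 + q ^ 2 * ‖b‖ ^ 2) := by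
  have := (abs_le.mp (abs_coupling_le hp hq hs F a b)).1
  unfold pdhgEnergy
  linarith

/-- Polarization of the energy between consecutive errors: the bracket is the inner product of the
PDHG increment with the new error. -/
lemma pdhgEnergy_polarization (p q s : ℝ) (F : V →L[ℝ] W) (a a' : V) (b b' : W) :
    2 * (p ^ 2 * ⟪a' - a, a'⟫ + q ^ 2 * ⟪b' - b, b'⟫
        - s * (p * q) * (⟪F a', b' - b⟫ + ⟪F (a' - a), b'⟫))
      = pdhgEnergy p q s F a' b' - pdhgEnergy p q s F a b
        + pdhgEnergy p q s F (a' - a) (b' - b) := by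
  simp only [pdhgEnergy, ← real_inner_self_eq_norm_sq, map_sub, inner_sub_left, inner_sub_right,
    real_inner_comm a a', real_inner_comm b b']
  ring

end Energy

/-- Theorem 5.2, iterate part: linear convergence of the fixed-step PDHG
iterates with optimal step sizes `τ = s√(γ/μ)`, `σ = s√(μ/γ)`. -/
theorem pdhg_strong_strong_iterate_rate {d1 d2 : ℕ} (μ γ s τ σ : ℝ)
    (hμ : 0 < μ) (hγ : 0 < γ) (hs : 0 < s)
    (hτ : τ = s * Real.sqrt (γ / μ)) (hσ : σ = s * Real.sqrt (μ / γ))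
    (f : EuclideanSpace ℝ (Fin d1) → ℝ) (hf : StronglyConvexWith μ f)
    (h : EuclideanSpace ℝ (Fin d2) → ℝ) (hh : StronglyConvexWith γ h)
    (F : EuclideanSpace ℝ (Fin d1) →L[ℝ] EuclideanSpace ℝ (Fin d2))
    (hsF : s * ‖F‖ < 1)
    (x : ℕ → EuclideanSpace ℝ (Fin d1)) (y : ℕ → EuclideanSpace ℝ (Fin d2))
    (xs : EuclideanSpace ℝ (Fin d1)) (ys : EuclideanSpace ℝ (Fin d2))
    (hdesc : ∀ k, IsSubgradAt f
      (-(τ⁻¹ • (x (k + 1) - x k) - (ContinuousLinearMap.adjoint F) (y (k + 1) - y k)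
          + (ContinuousLinearMap.adjoint F) (y (k + 1)))) (x (k + 1)))
    (hasc : ∀ k, IsSubgradAt h
      (-(σ⁻¹ • (y (k + 1) - y k) - F (x (k + 1) - x k) - F (x (k + 1)))) (y (k + 1)))
    (hsadx : IsSubgradAt f (-(ContinuousLinearMap.adjoint F) ys) xs)
    (hsady : IsSubgradAt h (F xs) ys) :
    ∀ k, μ * ‖x k - xs‖ ^ 2 + γ * ‖y k - ys‖ ^ 2
      ≤ (1 + s * ‖F‖) / (1 - s * ‖F‖)
        * ((1 + s * ‖F‖) / (1 + s * ‖F‖ + 2 * s * Real.sqrt (μ * γ))) ^ k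
        * (μ * ‖x 0 - xs‖ ^ 2 + γ * ‖y 0 - ys‖ ^ 2) := by
  obtain ⟨p, hp, rfl⟩ : ∃ p : ℝ, 0 < p ∧ p ^ 2 = μ :=
    ⟨√μ, Real.sqrt_pos.mpr hμ, Real.sq_sqrt hμ.le⟩
  obtain ⟨q, hq, rfl⟩ : ∃ q : ℝ, 0 < q ∧ q ^ 2 = γ :=
    ⟨√γ, Real.sqrt_pos.mpr hγ, Real.sq_sqrt hγ.le⟩
  have hr : √(p ^ 2 * q ^ 2) = p * q := by
    rw [← mul_pow, Real.sqrt_sq (by positivity)]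
  rw [← div_pow, Real.sqrt_sq (by positivity)] at hτ hσ
  rw [hr]
  have hτ' : s * (p * q) * τ⁻¹ = p ^ 2 := by rw [hτ]; field_simp
  have hσ' : s * (p * q) * σ⁻¹ = q ^ 2 := by rw [hσ]; field_simp
  have hL : 0 ≤ s * ‖F‖ := by positivity
  have hc : 0 < s * (p * q) := by positivity
  set G : ℕ → ℝ := fun k => pdhgEnergy p q s F (x k - xs) (y k - ys) with hG
  set ρ : ℝ := (1 + s * ‖F‖) / (1 + s * ‖F‖ + 2 * s * (p * q)) with hρ
  have hρ0 : 0 ≤ ρ := by positivity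
  have step : ∀ k, G (k + 1) ≤ ρ * G k := by
    intro k
    have h1 := hf.inner_sub_ge (hdesc k) hsadx
    have h2 := hh.inner_sub_ge (hasc k) hsady
    -- Everything is rewritten in terms of the errors relative to the saddle point.
    have e1 : -(τ⁻¹ • (x (k + 1) - x k) - (ContinuousLinearMap.adjoint F) (y (k + 1) - y k)
          + (ContinuousLinearMap.adjoint F) (y (k + 1))) - -(ContinuousLinearMap.adjoint F) ys
        = -(τ⁻¹ • ((x (k + 1) - xs) - (x k - xs)))
          + (ContinuousLinearMap.adjoint F) ((y (k + 1) - ys) - (y k - ys))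
          - (ContinuousLinearMap.adjoint F) (y (k + 1) - ys) := by
      simp only [map_sub, sub_sub_sub_cancel_right]
      abel
    have e2 : -(σ⁻¹ • (y (k + 1) - y k) - F (x (k + 1) - x k) - F (x (k + 1))) - F xs
        = -(σ⁻¹ • ((y (k + 1) - ys) - (y k - ys))) + F ((x (k + 1) - xs) - (x k - xs))
          + F (x (k + 1) - xs) := by
      simp only [map_sub, sub_sub_sub_cancel_right]
      abel
    rw [e1] at h1
    rw [e2] at h2
    have hpol := pdhgEnergy_polarization p q s F (x k - xs) (x (k + 1) - xs)
      (y k - ys) (y (k + 1) - ys)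
    have hup := pdhgEnergy_le hp hq hs F (x (k + 1) - xs) (y (k + 1) - ys)
    simp only [hG]
    generalize x (k + 1) - xs = a' at *
    generalize x k - xs = a at *
    generalize y (k + 1) - ys = b' at *
    generalize y k - ys = b at *
    rw [inner_sub_left, inner_add_left, inner_neg_left, real_inner_smul_left,
      ContinuousLinearMap.adjoint_inner_left, ContinuousLinearMap.adjoint_inner_left,
      real_inner_comm (F a') (b' - b), real_inner_comm (F a') b'] at h1
    rw [inner_add_left, inner_add_left, inner_neg_left, real_inner_smul_left] at h2
    have hpos : 0 ≤ pdhgEnergy p q s F (a' - a) (b' - b) :=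
      (mul_nonneg (by linarith) (by positivity)).trans (le_pdhgEnergy hp hq hs F _ _)
    have h3 := mul_le_mul_of_nonneg_left (add_le_add h1 h2) hc.le
    have h4 : pdhgEnergy p q s F a' b'
        + 2 * (s * (p * q)) * (p ^ 2 * ‖a'‖ ^ 2 + q ^ 2 * ‖b'‖ ^ 2)
          ≤ pdhgEnergy p q s F a b := by
      rw [← hτ', ← hσ'] at hpol
      linarith
    rw [hρ, div_mul_eq_mul_div, le_div_iff₀ (by positivity)]
    have h5 := mul_le_mul_of_nonneg_left hup (mul_nonneg zero_le_two hc.le)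
    have h6 := mul_le_mul_of_nonneg_left h4 (add_nonneg zero_le_one hL)
    linarith
  have rate : ∀ k, G k ≤ ρ ^ k * G 0 := by
    intro k
    induction k with
    | zero => simp
    | succ k ih =>
      calc G (k + 1) ≤ ρ * G k := step k
        _ ≤ ρ * (ρ ^ k * G 0) := by gcongr
        _ = _ := by ring
  intro k
  have hlow := le_pdhgEnergy hp hq hs F (x k - xs) (y k - ys)
  have hup := pdhgEnergy_le hp hq hs F (x 0 - xs) (y 0 - ys)
  have h7 := mul_le_mul_of_nonneg_left hup (pow_nonneg hρ0 k)
  have h8 := rate k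
  rw [div_mul_eq_mul_div, div_mul_eq_mul_div, le_div_iff₀ (by linarith)]
  simp only [hG] at h8
  linarith
end
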